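/- Let G be a finite group, n a positive integer, π : G → GL(ℂⁿ) a unitary representation, and Ω ⊆ G a sampling set of size m ≥ 1. For x ∈ ℂⁿ let A_x ∈ ℂ^{m×n} be the matrix whose row indexed by ω ∈ Ω is (1/√m) times the conjugate transpose of π(ω)*x. Let D_{s,n} = {x ∈ ℂⁿ : ‖x‖₂ ≤ 1, ‖x‖₀ ≤ s}, 𝒜 = {A_x : x ∈ D_{s,n}}, and B = {A_{±√2·e_j} : 1 ≤ j ≤ n} ∪ {A_{±√2·i·e_j} : 1 ≤ j ≤ n}. Then 𝒜 ⊆ √s·conv(B), i.e. every matrix A_x with x ∈ D_{s,n} is √s times a convex combination (with real nonnegative coefficients) of matrices from B. -/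

import Mathlib

open scoped ComplexConjugate Pointwise

/-- The ℓ²-norm of a finitely supported complex vector. -/
noncomputable def l2norm {ι : Type*} [Fintype ι] (v : ι → ℂ) : ℝ :=
  Real.sqrt (∑ i, ‖v i‖ ^ 2)

/-- Number of nonzero entries of a vector. -/
noncomputable def sparsity {n : ℕ} (x : Fin n → ℂ) : ℕ :=
  (Set.toFinite (Function.support x)).toFinset.card

/-- The matrix `A_x = (1/√m) · R_Ω (π(g)* x)*_{g∈G}`, whose row indexed by `ω ∈ Ω`
is `(1/√m)` times the conjugate transpose of `π(ω)* x`. -/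
noncomputable def Amat {G : Type*} [Group G] [Fintype G] {n : ℕ}
    (π : G →* Matrix.unitaryGroup (Fin n) ℂ) (Ω : Finset G) (x : Fin n → ℂ) :
    Matrix ↥Ω (Fin n) ℂ :=
  fun ω j =>
    (1 / (Real.sqrt Ω.card : ℂ)) *
      conj ((((π (ω : G) : Matrix (Fin n) (Fin n) ℂ)).conjTranspose.mulVec x) j)

/-!
The entries of `x` are handled one coordinate at a time: the unit disc of `ℂ` lies in the square
with vertices `±√2`, `±√2 i`, so `x j • e_j` lies in `‖x j‖ • K`, where `K` is the convex hull of
the vectors `±√2 e_j`, `±√2 i e_j`. Summing over `j`, convexity of `K` puts `x` in `‖x‖₁ • K`, and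
`‖x‖₁ ≤ √s ‖x‖₂ ≤ √s` by the Cauchy–Schwarz inequality on the support. It remains to apply the
real-linear map `x ↦ A_x`, which commutes with convex hulls and dilations.
-/

section Convexity

theorem sum_mem_sum_smul_of_convex {𝕜 E ι : Type*} [Field 𝕜] [LinearOrder 𝕜]
    [IsStrictOrderedRing 𝕜] [AddCommGroup E] [Module 𝕜 E] {K : Set E} (hK : Convex 𝕜 K)
    (hne : K.Nonempty) (t : Finset ι) {r : ι → 𝕜} (hr : ∀ i ∈ t, 0 ≤ r i) {v : ι → E}
    (hv : ∀ i ∈ t, v i ∈ r i • K) : ∑ i ∈ t, v i ∈ (∑ i ∈ t, r i) • K := by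
  classical
  induction t using Finset.induction_on with
  | empty => simp [Set.zero_smul_set hne]
  | insert i t hi ih =>
    rw [Finset.forall_mem_insert] at hr hv
    rw [Finset.sum_insert hi, Finset.sum_insert hi,
      hK.add_smul hr.1 (Finset.sum_nonneg hr.2)]
    exact Set.add_mem_add hv.1 (ih hr.2 hv.2)

variable {E : Type*} [AddCommGroup E] [Module ℝ E]

theorem balanced_convexHull_of_neg_mem {S : Set E} (hS : ∀ v ∈ S, -v ∈ S) :
    Balanced ℝ (convexHull ℝ S) := by
  have hneg : -S = S := Set.Subset.antisymm (fun v hv => neg_neg v ▸ hS _ hv) hS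
  refine (balanced_iff_neg_mem (convex_convexHull ℝ S)).mpr fun v hv => ?_
  rwa [← Set.mem_neg, ← convexHull_neg, hneg]

theorem smul_add_smul_mem_smul {K : Set E} (hconv : Convex ℝ K) (hbal : Balanced ℝ K)
    {p q : E} (hp : p ∈ K) (hq : q ∈ K) {a b r : ℝ} (hab : |a| + |b| ≤ r) :
    a • p + b • q ∈ r • K := by
  have smul_mem {c : ℝ} {v : E} (hv : v ∈ K) : c • v ∈ |c| • K :=
    hbal.smul_mono (by simp) (Set.smul_mem_smul_set hv)
  have hmem : a • p + b • q ∈ (|a| + |b|) • K := by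
    rw [hconv.add_smul (abs_nonneg a) (abs_nonneg b)]
    exact Set.add_mem_add (smul_mem hp) (smul_mem hq)
  refine hbal.smul_mono ?_ hmem
  rw [Real.norm_of_nonneg (by positivity)]
  exact hab.trans (le_abs_self r)

end Convexity

theorem abs_re_add_abs_im_le_sqrt_two_mul_norm (z : ℂ) : |z.re| + |z.im| ≤ √2 * ‖z‖ := by
  refine le_of_sq_le_sq ?_ (by positivity)
  calc (|z.re| + |z.im|) ^ 2 ≤ 2 * (|z.re| ^ 2 + |z.im| ^ 2) := add_sq_le
    _ = (√2 * ‖z‖) ^ 2 := by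
      rw [mul_pow, Real.sq_sqrt zero_le_two, Complex.sq_norm, Complex.normSq_apply, sq_abs, sq_abs,
        sq, sq]

theorem sum_norm_le_sqrt_ncard_support_mul_l2norm {ι : Type*} [Fintype ι] (x : ι → ℂ) :
    ∑ j, ‖x j‖ ≤ √(Function.support x).ncard * l2norm x := by
  classical
  have hcard : (Function.support x).ncard = (Finset.univ.filter (x · ≠ 0)).card := by
    rw [← Set.ncard_coe_finset]
    congr 1
    ext j
    simp
  have hsum : ∑ j, ‖x j‖ = ∑ j with x j ≠ 0, ‖x j‖ :=
    (Finset.sum_filter_of_ne fun j _ hj => norm_ne_zero_iff.mp hj).symm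
  rw [hcard, hsum, l2norm, ← Real.sqrt_mul (Nat.cast_nonneg _)]
  refine Real.le_sqrt_of_sq_le (sq_sum_le_card_mul_sum_sq.trans ?_)
  gcongr
  exact Finset.filter_subset _ _

theorem sparsity_eq_ncard_support {n : ℕ} (x : Fin n → ℂ) :
    sparsity x = (Function.support x).ncard :=
  (Set.ncard_eq_toFinset_card _).symm

section AxisPoints

variable {ι : Type*} [DecidableEq ι]

variable (ι) in
/-- The vectors `±√2 e_j` and `±√2 i e_j`, whose images under `x ↦ A_x` form the set `B`. -/
def axisPoints : Set (ι → ℂ) :=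
  {v | ∃ j : ι,
    v = (√2 : ℂ) • (Pi.single j (1 : ℂ) : ι → ℂ) ∨
    v = -((√2 : ℂ) • (Pi.single j (1 : ℂ) : ι → ℂ)) ∨
    v = ((√2 : ℂ) * Complex.I) • (Pi.single j (1 : ℂ) : ι → ℂ) ∨
    v = -(((√2 : ℂ) * Complex.I) • (Pi.single j (1 : ℂ) : ι → ℂ))}

theorem image_axisPoints {β : Type*} (f : (ι → ℂ) → β) :
    f '' axisPoints ι = {y | ∃ j : ι,
      y = f ((√2 : ℂ) • (Pi.single j (1 : ℂ) : ι → ℂ)) ∨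
      y = f (-((√2 : ℂ) • (Pi.single j (1 : ℂ) : ι → ℂ))) ∨
      y = f (((√2 : ℂ) * Complex.I) • (Pi.single j (1 : ℂ) : ι → ℂ)) ∨
      y = f (-(((√2 : ℂ) * Complex.I) • (Pi.single j (1 : ℂ) : ι → ℂ)))} := by
  ext y
  simp only [axisPoints, Set.mem_image, Set.mem_ofPred_eq]
  grind

theorem neg_mem_axisPoints {v : ι → ℂ} (hv : v ∈ axisPoints ι) : -v ∈ axisPoints ι := by
  obtain ⟨j, rfl | rfl | rfl | rfl⟩ := hv <;> exact ⟨j, by simp⟩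

theorem balanced_convexHull_axisPoints : Balanced ℝ (convexHull ℝ (axisPoints ι)) :=
  balanced_convexHull_of_neg_mem fun _ => neg_mem_axisPoints

theorem single_mem_norm_smul_convexHull_axisPoints (j : ι) (z : ℂ) :
    Pi.single j z ∈ ‖z‖ • convexHull ℝ (axisPoints ι) := by
  have hre : (√2 : ℂ) • Pi.single j 1 ∈ convexHull ℝ (axisPoints ι) :=
    subset_convexHull ℝ _ ⟨j, .inl rfl⟩
  have him : ((√2 : ℂ) * Complex.I) • Pi.single j 1 ∈ convexHull ℝ (axisPoints ι) :=
    subset_convexHull ℝ _ ⟨j, .inr (.inr (.inl rfl))⟩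
  have hcoeff : |z.re / √2| + |z.im / √2| ≤ ‖z‖ := by
    rw [abs_div, abs_div, abs_of_nonneg (Real.sqrt_nonneg 2), ← add_div,
      div_le_iff₀' (by positivity)]
    exact abs_re_add_abs_im_le_sqrt_two_mul_norm z
  have hz : z = (z.re / √2 : ℝ) * √2 + (z.im / √2 : ℝ) * (√2 * Complex.I) := by
    have : (√2 : ℂ) ≠ 0 := by simp
    push_cast
    field_simp
    rw [Complex.re_add_im]
  have hsingle : Pi.single j z = (z.re / √2) • ((√2 : ℂ) • (Pi.single j 1 : ι → ℂ)) +
      (z.im / √2) • (((√2 : ℂ) * Complex.I) • (Pi.single j 1 : ι → ℂ)) := by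
    conv_lhs => rw [hz]
    simp only [← Pi.single_smul, ← Pi.single_add, Complex.real_smul, smul_eq_mul, mul_one]
  rw [hsingle]
  exact smul_add_smul_mem_smul (convex_convexHull ℝ _) balanced_convexHull_axisPoints hre him hcoeff

variable [Fintype ι] [Nonempty ι]

theorem mem_sum_norm_smul_convexHull_axisPoints (x : ι → ℂ) :
    x ∈ (∑ j, ‖x j‖) • convexHull ℝ (axisPoints ι) := by
  have hne : (convexHull ℝ (axisPoints ι)).Nonempty :=
    convexHull_nonempty_iff.mpr ⟨_, Classical.arbitrary ι, .inl rfl⟩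
  have hsum := sum_mem_sum_smul_of_convex (convex_convexHull ℝ (axisPoints ι)) hne Finset.univ
    (fun j _ => norm_nonneg (x j))
    fun j _ => single_mem_norm_smul_convexHull_axisPoints j (x j)
  rwa [Finset.univ_sum_single] at hsum

theorem mem_sqrt_smul_convexHull_axisPoints {s : ℕ} {x : ι → ℂ} (hx : l2norm x ≤ 1)
    (hs : (Function.support x).ncard ≤ s) : x ∈ √s • convexHull ℝ (axisPoints ι) := by
  have hnorm : ∑ j, ‖x j‖ ≤ √s :=
    calc ∑ j, ‖x j‖ ≤ √(Function.support x).ncard * l2norm x :=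
          sum_norm_le_sqrt_ncard_support_mul_l2norm x
      _ ≤ √s * 1 := by gcongr; exact Real.sqrt_nonneg _
      _ = √s := mul_one _
  refine balanced_convexHull_axisPoints.smul_mono ?_ (mem_sum_norm_smul_convexHull_axisPoints x)
  rwa [Real.norm_of_nonneg (by positivity), Real.norm_of_nonneg (by positivity)]

theorem stmt5_general {E : Type*} [AddCommGroup E] [Module ℝ E] (L : (ι → ℂ) →ₗ[ℝ] E)
    {s : ℕ} {x : ι → ℂ} (hx : l2norm x ≤ 1) (hs : (Function.support x).ncard ≤ s) :
    L x ∈ √s • convexHull ℝ (L '' axisPoints ι) := by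
  rw [← L.image_convexHull, ← image_smul_set]
  exact Set.mem_image_of_mem L (mem_sqrt_smul_convexHull_axisPoints hx hs)

end AxisPoints

/-- The map `x ↦ A_x`. It is conjugate-linear over `ℂ`; only its linearity over `ℝ` is recorded,
which is what convex hulls over `ℝ` see. -/
noncomputable def amatLinearMap {G : Type*} [Group G] [Fintype G] {n : ℕ}
    (π : G →* Matrix.unitaryGroup (Fin n) ℂ) (Ω : Finset G) :
    (Fin n → ℂ) →ₗ[ℝ] Matrix ↥Ω (Fin n) ℂ where
  toFun := Amat π Ω
  map_add' x y := by
    ext ω j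
    simp only [Amat, Matrix.mulVec_add, Pi.add_apply, map_add, mul_add, Matrix.add_apply]
  map_smul' r x := by
    ext ω j
    simp only [Amat, Matrix.mulVec_smul, Pi.smul_apply, Matrix.smul_apply, RingHom.id_apply,
      Complex.real_smul, map_mul, Complex.conj_ofReal]
    ring

theorem stmt5 {G : Type*} [Group G] [Fintype G] {n m s : ℕ} (hn : 1 ≤ n)
    (π : G →* Matrix.unitaryGroup (Fin n) ℂ) (Ω : Finset G)
    (hm : Ω.card = m) (hm1 : 1 ≤ m) (hs : 1 ≤ s) (hsn : s ≤ n)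
    (B : Set (Matrix ↥Ω (Fin n) ℂ))
    (hB : B = {A | ∃ j : Fin n,
      A = Amat π Ω ((Real.sqrt 2 : ℂ) • (Pi.single j (1 : ℂ) : Fin n → ℂ)) ∨
      A = Amat π Ω (-((Real.sqrt 2 : ℂ) • (Pi.single j (1 : ℂ) : Fin n → ℂ))) ∨
      A = Amat π Ω (((Real.sqrt 2 : ℂ) * Complex.I) • (Pi.single j (1 : ℂ) : Fin n → ℂ)) ∨
      A = Amat π Ω (-(((Real.sqrt 2 : ℂ) * Complex.I) • (Pi.single j (1 : ℂ) : Fin n → ℂ)))}) :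
    ∀ x : Fin n → ℂ, l2norm x ≤ 1 → sparsity x ≤ s →
      Amat π Ω x ∈ (Real.sqrt s : ℝ) • convexHull ℝ B := by
  intro x hx hxs
  have : Nonempty (Fin n) := Fin.pos_iff_nonempty.mp hn
  rw [hB, ← image_axisPoints (Amat π Ω)]
  exact stmt5_general (amatLinearMap π Ω) hx (sparsity_eq_ncard_support x ▸ hxs)
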